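/- arXiv:0709.0242 — 5 statements merged into one kernel-verified Lean document; each statement's English description precedes it below -/
import Mathlib

section
/- Let U ⊆ ℝ^{2n} be open with coordinates (λ_1,…,λ_n,μ_1,…,μ_n), let H_1,…,H_n : U → ℝ be smooth, and suppose there exist smooth 'separated relations' Φ_1,…,Φ_n : ℝ × ℝ × ℝ^n → ℝ such that Φ_i(λ_i, μ_i, H_1,…,H_n) = 0 identically on U for each i = 1,…,n, and such that the n×n matrix with entries M_{ij} = (∂Φ_i/∂h_j)(λ_i, μ_i, H_1,…,H_n) is invertible at every point of U. Then for every k ∈ ℕ and all a, b ∈ {1,…,n}, the functions are in involution: {H_a, H_b}_k = 0 on U. In particular the H_a are in bi-involution with respect to the compatible brackets {·,·}_0 and {·,·}_1. -/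
/-!
STATEMENT 1: If smooth functions H_1,…,H_n on an open set U ⊆ ℝ^{2n} satisfy separated
relations Φ_i(λ_i, μ_i, H_1,…,H_n) = 0 with the matrix (∂Φ_i/∂h_j) invertible on U, then
for every k the functions H_a are in involution with respect to the bracket
{f,g}_k = Σ_i λ_i^{2k} (∂f/∂λ_i ∂g/∂μ_i − ∂f/∂μ_i ∂g/∂λ_i); in particular they are in
bi-involution with respect to the compatible brackets {·,·}_0 and {·,·}_1.
-/

noncomputable section

/-- The phase space with coordinates (λ_1,…,λ_n,μ_1,…,μ_n). -/
abbrev Pt (n : ℕ) := (Fin n → ℝ) × (Fin n → ℝ)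

/-- Partial derivative in the coordinate λ_i. -/
noncomputable def dLam {n : ℕ} (i : Fin n) (f : Pt n → ℝ) (x : Pt n) : ℝ :=
  fderiv ℝ f x (Pi.single i 1, 0)

/-- Partial derivative in the coordinate μ_i. -/
noncomputable def dMu {n : ℕ} (i : Fin n) (f : Pt n → ℝ) (x : Pt n) : ℝ :=
  fderiv ℝ f x (0, Pi.single i 1)

/-- The bracket `{f,g}_k = Σ_i λ_i^{2k} (∂f/∂λ_i ∂g/∂μ_i − ∂f/∂μ_i ∂g/∂λ_i)`. -/
noncomputable def pbk (n k : ℕ) (f g : Pt n → ℝ) (x : Pt n) : ℝ :=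
  ∑ i : Fin n, (x.1 i) ^ (2 * k) *
    (dLam i f x * dMu i g x - dMu i f x * dLam i g x)

/-!
Differentiate the separated relations in the direction of `λ_l` or `μ_l`. Since `Φ_i` involves only
the pair `(λ_i, μ_i)`, this gives a linear system `M *ᵥ ∂H = -∂Φ` whose right-hand side vanishes off
its `l`-th entry. Hence `∂H/∂λ_l` and `∂H/∂μ_l` are both multiples of the `l`-th column of `M⁻¹`, so
every term of the bracket vanishes separately, whatever its weight.
-/

section LinearAlgebra

open scoped Matrix

variable {R ι κ : Type*} [CommRing R] [Fintype ι] [DecidableEq ι]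

theorem of_apply_single_mulVec (T : κ → (ι → R) →ₗ[R] R) (w : ι → R) :
    (Matrix.of fun i j => T i (Pi.single j 1)) *ᵥ w = fun i => T i w :=
  LinearMap.toMatrix'_mulVec (LinearMap.pi T) w

theorem eq_smul_inv_col_of_mulVec_eq_single {M : Matrix ι ι R} (hM : IsUnit M.det) {u : ι → R}
    {l : ι} {r : R} (hu : M *ᵥ u = Pi.single l r) : u = r • M⁻¹.col l := by
  calc u = M⁻¹ *ᵥ (M *ᵥ u) := by
        rw [Matrix.mulVec_mulVec, Matrix.nonsing_inv_mul M hM, Matrix.one_mulVec]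
    _ = r • M⁻¹.col l := by rw [hu, Matrix.mulVec_single, op_smul_eq_smul]

theorem mul_sub_mul_eq_zero_of_mulVec_eq_single {M : Matrix ι ι R} (hM : IsUnit M.det)
    {u v : ι → R} {l : ι} {r s : R} (hu : M *ᵥ u = Pi.single l r) (hv : M *ᵥ v = Pi.single l s)
    (a b : ι) : u a * v b - v a * u b = 0 := by
  rw [eq_smul_inv_col_of_mulVec_eq_single hM hu, eq_smul_inv_col_of_mulVec_eq_single hM hv]
  simp only [Pi.smul_apply, smul_eq_mul]
  ring

end LinearAlgebra

open Filter Topology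

section Calculus

variable {𝕜 E F G : Type*} [NontriviallyNormedField 𝕜] [NormedAddCommGroup E] [NormedSpace 𝕜 E]
  [NormedAddCommGroup F] [NormedSpace 𝕜 F] [NormedAddCommGroup G] [NormedSpace 𝕜 G]

theorem fderiv_apply_eq_zero_of_comp_eventuallyEq_const {Φ : F → G} {g : E → F} {g' : E →L[𝕜] F}
    {x : E} {c : G} (hΦ : DifferentiableAt 𝕜 Φ (g x)) (hg : HasFDerivAt g g' x)
    (h : ∀ᶠ y in 𝓝 x, Φ (g y) = c) (v : E) : fderiv 𝕜 Φ (g x) (g' v) = 0 :=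
  have hconst : HasFDerivAt (Φ ∘ g) 0 x := (hasFDerivAt_const c x).congr_of_eventuallyEq h
  DFunLike.congr_fun ((hΦ.hasFDerivAt.comp x hg).unique hconst) v

end Calculus

section Separation

open scoped Matrix

variable {𝕜 ι : Type*}

/-- The arguments `(λ_i, μ_i, H_1, …, H_n)` of the `i`-th separated relation at the phase-space
point `x = (λ, μ)`. -/
def separatedArgs (H : ι → (ι → 𝕜) × (ι → 𝕜) → 𝕜) (i : ι) (x : (ι → 𝕜) × (ι → 𝕜)) :
    𝕜 × 𝕜 × (ι → 𝕜) :=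
  (x.1 i, x.2 i, fun a => H a x)

variable [NontriviallyNormedField 𝕜]
  {H : ι → (ι → 𝕜) × (ι → 𝕜) → 𝕜} {Φ : ι → 𝕜 × 𝕜 × (ι → 𝕜) → 𝕜} {x : (ι → 𝕜) × (ι → 𝕜)}

theorem hasFDerivAt_separatedArgs [Finite ι] (hH : ∀ a, DifferentiableAt 𝕜 (H a) x) (i : ι) :
    HasFDerivAt (separatedArgs H i)
      (((ContinuousLinearMap.proj i).comp (ContinuousLinearMap.fst 𝕜 (ι → 𝕜) (ι → 𝕜))).prod
        (((ContinuousLinearMap.proj i).comp (ContinuousLinearMap.snd 𝕜 (ι → 𝕜) (ι → 𝕜))).prod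
          (ContinuousLinearMap.pi fun a => fderiv 𝕜 (H a) x))) x := by
  have := Fintype.ofFinite ι
  have hlam := ((ContinuousLinearMap.proj (R := 𝕜) (φ := fun _ : ι => 𝕜) i).comp
    (ContinuousLinearMap.fst 𝕜 (ι → 𝕜) (ι → 𝕜))).hasFDerivAt (x := x)
  have hmu := ((ContinuousLinearMap.proj (R := 𝕜) (φ := fun _ : ι => 𝕜) i).comp
    (ContinuousLinearMap.snd 𝕜 (ι → 𝕜) (ι → 𝕜))).hasFDerivAt (x := x)
  exact hlam.prodMk (hmu.prodMk (hasFDerivAt_pi.2 fun a => (hH a).hasFDerivAt))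

variable [DecidableEq ι]

/-- The matrix `M_{ij} = ∂Φ_i/∂h_j (λ_i, μ_i, H_1, …, H_n)` at the phase-space point `x = (λ, μ)`,
whose invertibility lets the differentiated relations determine the derivatives of the `H_a`. -/
def separationMatrix (Φ : ι → 𝕜 × 𝕜 × (ι → 𝕜) → 𝕜) (H : ι → (ι → 𝕜) × (ι → 𝕜) → 𝕜)
    (x : (ι → 𝕜) × (ι → 𝕜)) : Matrix ι ι 𝕜 :=
  Matrix.of fun i j => fderiv 𝕜 (Φ i) (separatedArgs H i x) (0, 0, Pi.single j 1)

variable [Fintype ι]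

theorem separationMatrix_mulVec (w : ι → 𝕜) :
    separationMatrix Φ H x *ᵥ w = fun i => fderiv 𝕜 (Φ i) (separatedArgs H i x) (0, 0, w) :=
  of_apply_single_mulVec (fun i => (fderiv 𝕜 (Φ i) (separatedArgs H i x)).toLinearMap ∘ₗ
    LinearMap.inr 𝕜 𝕜 (𝕜 × (ι → 𝕜)) ∘ₗ LinearMap.inr 𝕜 𝕜 (ι → 𝕜)) w

theorem separationMatrix_mulVec_fderiv (hH : ∀ a, DifferentiableAt 𝕜 (H a) x)
    (hΦ : ∀ i, DifferentiableAt 𝕜 (Φ i) (separatedArgs H i x))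
    (hrel : ∀ i, ∀ᶠ y in 𝓝 x, Φ i (separatedArgs H i y) = 0) (v : (ι → 𝕜) × (ι → 𝕜)) :
    separationMatrix Φ H x *ᵥ (fun a => fderiv 𝕜 (H a) x v) =
      fun i => -fderiv 𝕜 (Φ i) (separatedArgs H i x) (v.1 i, v.2 i, 0) := by
  rw [separationMatrix_mulVec]
  ext i
  have hchain : fderiv 𝕜 (Φ i) (separatedArgs H i x)
      (v.1 i, v.2 i, fun a => fderiv 𝕜 (H a) x v) = 0 :=
    fderiv_apply_eq_zero_of_comp_eventuallyEq_const (hΦ i) (hasFDerivAt_separatedArgs hH i)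
      (hrel i) v
  rw [eq_neg_iff_add_eq_zero, ← map_add]
  simpa using hchain

theorem separationMatrix_mulVec_fderiv_single (hH : ∀ a, DifferentiableAt 𝕜 (H a) x)
    (hΦ : ∀ i, DifferentiableAt 𝕜 (Φ i) (separatedArgs H i x))
    (hrel : ∀ i, ∀ᶠ y in 𝓝 x, Φ i (separatedArgs H i y) = 0) (l : ι) (s t : 𝕜) :
    separationMatrix Φ H x *ᵥ (fun a => fderiv 𝕜 (H a) x (Pi.single l s, Pi.single l t)) =
      Pi.single l (-fderiv 𝕜 (Φ l) (separatedArgs H l x) (s, t, 0)) := by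
  rw [separationMatrix_mulVec_fderiv hH hΦ hrel]
  ext i
  obtain rfl | hil := eq_or_ne i l
  · simp only [Pi.single_eq_same]
  · simp only [Pi.single_eq_of_ne hil, Prod.mk_zero_zero, map_zero, neg_zero]

/-- The bracket `{f,g}_w = Σ_i w_i (∂f/∂λ_i ∂g/∂μ_i − ∂f/∂μ_i ∂g/∂λ_i)` with arbitrary weight
functions `w_i` on phase space; `pbk` is the case `w_i = λ_i ^ (2 * k)`. -/
def weightedBracket (w : ι → (ι → 𝕜) × (ι → 𝕜) → 𝕜) (f g : (ι → 𝕜) × (ι → 𝕜) → 𝕜)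
    (x : (ι → 𝕜) × (ι → 𝕜)) : 𝕜 :=
  ∑ i, w i x *
    (fderiv 𝕜 f x (Pi.single i 1, 0) * fderiv 𝕜 g x (0, Pi.single i 1) -
      fderiv 𝕜 f x (0, Pi.single i 1) * fderiv 𝕜 g x (Pi.single i 1, 0))

theorem statement1_general (hH : ∀ a, DifferentiableAt 𝕜 (H a) x)
    (hΦ : ∀ i, DifferentiableAt 𝕜 (Φ i) (separatedArgs H i x))
    (hrel : ∀ i, ∀ᶠ y in 𝓝 x, Φ i (separatedArgs H i y) = 0)
    (hM : (separationMatrix Φ H x).det ≠ 0) (w : ι → (ι → 𝕜) × (ι → 𝕜) → 𝕜) (a b : ι) :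
    weightedBracket w (H a) (H b) x = 0 := by
  refine Finset.sum_eq_zero fun l _ => mul_eq_zero_of_right _ ?_
  have hlam := separationMatrix_mulVec_fderiv_single hH hΦ hrel l 1 0
  have hmu := separationMatrix_mulVec_fderiv_single hH hΦ hrel l 0 1
  rw [Pi.single_zero] at hlam hmu
  exact mul_sub_mul_eq_zero_of_mulVec_eq_single hM.isUnit hlam hmu a b

end Separation

theorem statement1 (n : ℕ) (hn : 1 ≤ n)
    (U : Set (Pt n)) (hU : IsOpen U)
    (H : Fin n → Pt n → ℝ) (hH : ∀ a : Fin n, ContDiffOn ℝ (⊤ : ℕ∞) (H a) U)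
    (Φ : Fin n → ℝ × ℝ × (Fin n → ℝ) → ℝ) (hΦ : ∀ i : Fin n, ContDiff ℝ (⊤ : ℕ∞) (Φ i))
    (hrel : ∀ i : Fin n, ∀ x ∈ U, Φ i (x.1 i, x.2 i, fun a => H a x) = 0)
    (hM : ∀ x ∈ U,
      (Matrix.of fun i j : Fin n =>
        fderiv ℝ (Φ i) (x.1 i, x.2 i, fun a => H a x) (0, 0, Pi.single j 1)).det ≠ 0) :
    ∀ k : ℕ, ∀ a b : Fin n, ∀ x ∈ U, pbk n k (H a) (H b) x = 0 := by
  intro k a b x hx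
  have hUx : U ∈ 𝓝 x := hU.mem_nhds hx
  exact statement1_general
    (fun c => ((hH c).contDiffAt hUx).differentiableAt (by simp))
    (fun i => (hΦ i).differentiable (by simp) _)
    (fun i => eventually_of_mem hUx (hrel i)) (hM x hx) (fun i y => y.1 i ^ (2 * k)) a b

end
end

section
/- The cubic bracket {·,·}_1 on polynomials in s_1, s_2, s_3, defined by {s_i,s_j}_1 = ε_{ijk} s_k ((s_3+c)² − 2a_1(s_1+ i s_2)(s_3+c) − 2a_0(s_1+ i s_2)), satisfies the Jacobi identity {f,{g,h}}_1 + {g,{h,f}}_1 + {h,{f,g}}_1 = 0 for all polynomials f, g, h. -/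
/-!
STATEMENT 2: The cubic bracket {·,·}_1 on polynomials in s_1, s_2, s_3 over ℂ, defined by
{s_i,s_j}_1 = ε_{ijk} s_k ((s_3+c)² − 2a_1(s_1+ i s_2)(s_3+c) − 2a_0(s_1+ i s_2)),
satisfies the Jacobi identity.
-/

noncomputable section
open MvPolynomial

/-- Polynomials in the three variables s_1, s_2, s_3 over ℂ. -/
abbrev P3 := MvPolynomial (Fin 3) ℂ

/-- The bracket on polynomials associated with a Poisson structure matrix `π`:
`{f,g} = Σ_{i,j} π i j ∂_i f ∂_j g`. -/
noncomputable def sbr3 (π : Fin 3 → Fin 3 → P3) (f g : P3) : P3 :=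
  ∑ i : Fin 3, ∑ j : Fin 3, π i j * pderiv i f * pderiv j g

/-- The cubic factor W = (s_3+c)² − 2a_1(s_1+ i s_2)(s_3+c) − 2a_0(s_1+ i s_2). -/
noncomputable def Wfac (a0 a1 c : ℂ) : P3 :=
  (X 2 + C c) ^ 2 - C (2 * a1) * (X 0 + C Complex.I * X 1) * (X 2 + C c)
    - C (2 * a0) * (X 0 + C Complex.I * X 1)

/-- The sl(2) Lie–Poisson structure matrix: {s_i,s_j}_0 = ε_{ijk} s_k. -/
noncomputable def pi30 : Fin 3 → Fin 3 → P3 := fun i j =>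
  !![0, X 2, -(X 1); -(X 2), 0, X 0; X 1, -(X 0), 0] i j

/-- The cubic structure matrix: {s_i,s_j}_1 = ε_{ijk} s_k · W. -/
noncomputable def pi31 (a0 a1 c : ℂ) : Fin 3 → Fin 3 → P3 := fun i j =>
  pi30 i j * Wfac a0 a1 c

/-!
In dimension three a bracket is `{f, g} = v · (∇f × ∇g)` for a vector field `v`, and its Jacobiator
is `-(v · curl v) (∇f · (∇g × ∇h))`. Since `curl (w v) = w curl v + ∇w × v` and `∇w × v` is
orthogonal to `v`, the condition `v · curl v = 0` survives multiplication of `v` by an arbitrary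
function `w`. The sl(2) bracket belongs to the position field `s`, whose curl vanishes, so `w s`
defines a Poisson bracket for every polynomial `w`.
-/

open Matrix

section VectorCalculus

variable {R A : Type*} [CommRing R] [CommRing A] [Algebra R A] (D : Fin 3 → Derivation R A A)

/-- The gradient of `f` with respect to a triple of derivations. -/
def grad (f : A) : Fin 3 → A := fun i => D i f

/-- The curl of a vector field with respect to a triple of derivations. -/
def curl (v : Fin 3 → A) : Fin 3 → A :=
  ![D 1 (v 2) - D 2 (v 1), D 2 (v 0) - D 0 (v 2), D 0 (v 1) - D 1 (v 0)]

/-- The bracket `{f, g} = v · (∇f × ∇g)` of a vector field `v`, the form taken by every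
antisymmetric biderivation in three variables. -/
def vectorBracket (v : Fin 3 → A) (f g : A) : A := v ⬝ᵥ grad D f ⨯₃ grad D g

theorem curl_smul (w : A) (v : Fin 3 → A) :
    curl D (w • v) = w • curl D v + grad D w ⨯₃ v := by
  ext i
  fin_cases i <;>
    simp only [curl, grad, cross_apply, Pi.smul_apply, Pi.add_apply, smul_eq_mul,
      Derivation.leibniz, Fin.zero_eta, Fin.mk_one, Fin.reduceFinMk, cons_val] <;>
    ring

theorem smul_dotProduct_curl_smul (w : A) (v : Fin 3 → A) :
    w • v ⬝ᵥ curl D (w • v) = w ^ 2 * (v ⬝ᵥ curl D v) := by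
  have cross_orthogonal : v ⬝ᵥ grad D w ⨯₃ v = 0 := dot_cross_self _ _
  rw [curl_smul, smul_dotProduct, dotProduct_add, dotProduct_smul, cross_orthogonal]
  simp only [smul_eq_mul]
  ring

variable {D}

theorem vectorBracket_jacobiator (hD : ∀ i j, ⁅D i, D j⁆ = 0) (v : Fin 3 → A) (f g h : A) :
    vectorBracket D v f (vectorBracket D v g h) + vectorBracket D v g (vectorBracket D v h f)
        + vectorBracket D v h (vectorBracket D v f g)
      = -(v ⬝ᵥ curl D v) * (grad D f ⬝ᵥ grad D g ⨯₃ grad D h) := by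
  have D_comm (i j : Fin 3) (p : A) : D i (D j p) = D j (D i p) := by
    rw [← sub_eq_zero, ← Derivation.commutator_apply, hD, Derivation.zero_apply]
  simp only [vectorBracket, curl, grad, cross_apply, vec3_dotProduct, cons_val,
    map_add, map_sub, Derivation.leibniz, smul_eq_mul, D_comm 1 0, D_comm 2 0, D_comm 2 1]
  ring

theorem vectorBracket_smul_jacobi (hD : ∀ i j, ⁅D i, D j⁆ = 0) {v : Fin 3 → A}
    (hv : v ⬝ᵥ curl D v = 0) (w f g h : A) :
    vectorBracket D (w • v) f (vectorBracket D (w • v) g h)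
      + vectorBracket D (w • v) g (vectorBracket D (w • v) h f)
      + vectorBracket D (w • v) h (vectorBracket D (w • v) f g) = 0 := by
  rw [vectorBracket_jacobiator hD, smul_dotProduct_curl_smul, hv, mul_zero, neg_zero, zero_mul]

end VectorCalculus

theorem commutator_pderiv {σ R : Type*} [CommRing R] (i j : σ) :
    ⁅pderiv (R := R) i, pderiv (R := R) j⁆ = 0 := by
  classical
  refine derivation_ext fun k => ?_
  simp [Derivation.commutator_apply, pderiv_X, Pi.single_apply, apply_ite]

theorem curl_pderiv_X {R : Type*} [CommRing R] :
    curl (pderiv (R := R)) (X : Fin 3 → MvPolynomial (Fin 3) R) = 0 := by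
  simp [curl]

theorem sbr3_pi30_mul (W f g : P3) :
    sbr3 (fun i j => pi30 i j * W) f g = vectorBracket pderiv (W • X) f g := by
  simp only [sbr3, pi30, vectorBracket, grad, cross_apply, vec3_dotProduct, Fin.sum_univ_three,
    of_apply, cons_val, Pi.smul_apply, smul_eq_mul]
  ring

theorem statement2_general (W f g h : P3) :
    sbr3 (fun i j => pi30 i j * W) f (sbr3 (fun i j => pi30 i j * W) g h)
      + sbr3 (fun i j => pi30 i j * W) g (sbr3 (fun i j => pi30 i j * W) h f)
      + sbr3 (fun i j => pi30 i j * W) h (sbr3 (fun i j => pi30 i j * W) f g) = 0 := by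
  have position_dot_curl : (X : Fin 3 → P3) ⬝ᵥ curl (pderiv (R := ℂ)) X = 0 := by
    rw [curl_pderiv_X, dotProduct_zero]
  simp only [sbr3_pi30_mul]
  exact vectorBracket_smul_jacobi commutator_pderiv position_dot_curl W f g h

theorem statement2 (a0 a1 c : ℂ) (f g h : P3) :
    sbr3 (pi31 a0 a1 c) f (sbr3 (pi31 a0 a1 c) g h)
      + sbr3 (pi31 a0 a1 c) g (sbr3 (pi31 a0 a1 c) h f)
      + sbr3 (pi31 a0 a1 c) h (sbr3 (pi31 a0 a1 c) f g) = 0 :=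
  statement2_general (Wfac a0 a1 c) f g h

end
end

section
/- The sl(2) Lie–Poisson bracket {·,·}_0 and the cubic bracket {·,·}_1 are compatible: for all scalars α, β ∈ ℂ, the bracket α{·,·}_0 + β{·,·}_1 satisfies the Jacobi identity on polynomials in s_1, s_2, s_3. -/
/-!
STATEMENT 3: The sl(2) Lie–Poisson bracket {·,·}_0 and the cubic bracket {·,·}_1 on
polynomials in s_1, s_2, s_3 over ℂ are compatible: every linear combination
α{·,·}_0 + β{·,·}_1 satisfies the Jacobi identity.
-/

noncomputable section
open MvPolynomial

/-- The linear combination α{·,·}_0 + β{·,·}_1. -/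
noncomputable def combo3 (α β a0 a1 c : ℂ) (f g : P3) : P3 :=
  C α * sbr3 pi30 f g + C β * sbr3 (pi31 a0 a1 c) f g

/-!
A bracket in three variables has the form `{f, g} = v · (∇f × ∇g)`, and its Jacobiator is
`-(v · curl v) det(∇f, ∇g, ∇h)`. Rescaling `v` by a polynomial `w` only multiplies `v · curl v`
by `w²`, because `v · (∇w × v) = 0`. Every combination `α{·,·}_0 + β{·,·}_1` is the rescaling by
`w = α + βW` of the bracket with `v = s`, and the field `s` is curl-free.
-/

theorem pderiv_pderiv_comm {R σ : Type*} [CommSemiring R] (i j : σ) (f : MvPolynomial σ R) :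
    pderiv i (pderiv j f) = pderiv j (pderiv i f) := by
  classical
  induction f using MvPolynomial.induction_on with
  | C a => simp only [pderiv_C, map_zero]
  | add p q hp hq => simp only [map_add, hp, hq]
  | mul_X p k hp =>
    simp only [pderiv_mul, map_add, hp, pderiv_X, Pi.single_apply, apply_ite (pderiv _),
      pderiv_one, map_zero, ite_self, mul_zero, add_zero]
    ring

section VectorCalculus

open scoped Matrix

variable {R : Type*} [CommRing R]

/-- The gradient of a polynomial, as a vector of polynomials. -/
def polyGrad (f : MvPolynomial (Fin 3) R) : Fin 3 → MvPolynomial (Fin 3) R :=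
  fun i => pderiv i f

/-- The curl of a polynomial vector field in three variables. -/
def polyCurl (v : Fin 3 → MvPolynomial (Fin 3) R) : Fin 3 → MvPolynomial (Fin 3) R :=
  ![pderiv 1 (v 2) - pderiv 2 (v 1),
    pderiv 2 (v 0) - pderiv 0 (v 2),
    pderiv 0 (v 1) - pderiv 1 (v 0)]

/-- The antisymmetric biderivation `v · (∇f × ∇g)`, that is, `{s_i, s_j} = ε_{ijk} v_k`. Every
antisymmetric `R`-biderivation in three variables has this form for a unique vector field `v`. -/
def crossBracket (v : Fin 3 → MvPolynomial (Fin 3) R) (f g : MvPolynomial (Fin 3) R) :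
    MvPolynomial (Fin 3) R :=
  v ⬝ᵥ polyGrad f ⨯₃ polyGrad g

theorem crossBracket_smul (w : MvPolynomial (Fin 3) R) (v : Fin 3 → MvPolynomial (Fin 3) R)
    (f g : MvPolynomial (Fin 3) R) :
    crossBracket (w • v) f g = w * crossBracket v f g :=
  smul_dotProduct w v _

theorem crossBracket_apply (v : Fin 3 → MvPolynomial (Fin 3) R) (f g : MvPolynomial (Fin 3) R) :
    crossBracket v f g =
      v 0 * (pderiv 1 f * pderiv 2 g - pderiv 2 f * pderiv 1 g)
        + v 1 * (pderiv 2 f * pderiv 0 g - pderiv 0 f * pderiv 2 g)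
        + v 2 * (pderiv 0 f * pderiv 1 g - pderiv 1 f * pderiv 0 g) := by
  simp only [crossBracket, polyGrad, cross_apply, Matrix.vec3_dotProduct, Matrix.cons_val]

-- Second derivatives of `f`, `g`, `h` cancel by symmetry, so only first derivatives of `v` survive.
theorem crossBracket_jacobiator (v : Fin 3 → MvPolynomial (Fin 3) R)
    (f g h : MvPolynomial (Fin 3) R) :
    crossBracket v f (crossBracket v g h) + crossBracket v g (crossBracket v h f)
        + crossBracket v h (crossBracket v f g) =
      -((v ⬝ᵥ polyCurl v) * (polyGrad f ⬝ᵥ polyGrad g ⨯₃ polyGrad h)) := by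
  have triple_product : polyGrad f ⬝ᵥ polyGrad g ⨯₃ polyGrad h =
      crossBracket (polyGrad f) g h := rfl
  simp only [triple_product, crossBracket_apply, Matrix.vec3_dotProduct, polyCurl, polyGrad,
    Matrix.cons_val, map_add, map_sub, Derivation.leibniz, smul_eq_mul,
    pderiv_pderiv_comm (1 : Fin 3) 0, pderiv_pderiv_comm (2 : Fin 3) 0,
    pderiv_pderiv_comm (2 : Fin 3) 1]
  ring

theorem polyCurl_smul (w : MvPolynomial (Fin 3) R) (v : Fin 3 → MvPolynomial (Fin 3) R) :
    polyCurl (w • v) = w • polyCurl v + polyGrad w ⨯₃ v := by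
  ext1 i
  fin_cases i <;>
    simp only [polyCurl, polyGrad, cross_apply, Pi.add_apply, Pi.smul_apply, smul_eq_mul,
      pderiv_mul, Fin.zero_eta, Fin.mk_one, Fin.reduceFinMk, Matrix.cons_val] <;>
    ring

theorem polyCurl_X : polyCurl (X : Fin 3 → MvPolynomial (Fin 3) R) = 0 := by
  simp [polyCurl]

theorem smul_dotProduct_polyCurl_smul (w : MvPolynomial (Fin 3) R)
    (v : Fin 3 → MvPolynomial (Fin 3) R) :
    (w • v) ⬝ᵥ polyCurl (w • v) = w ^ 2 * (v ⬝ᵥ polyCurl v) := by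
  rw [polyCurl_smul, smul_dotProduct, dotProduct_add, dotProduct_smul, dot_cross_self]
  simp only [smul_eq_mul]
  ring

theorem statement3_general (w f g h : MvPolynomial (Fin 3) R) :
    crossBracket (w • X) f (crossBracket (w • X) g h)
      + crossBracket (w • X) g (crossBracket (w • X) h f)
      + crossBracket (w • X) h (crossBracket (w • X) f g) = 0 := by
  rw [crossBracket_jacobiator, smul_dotProduct_polyCurl_smul, polyCurl_X, dotProduct_zero,
    mul_zero, zero_mul, neg_zero]

end VectorCalculus

theorem sbr3_mul_right (π : Fin 3 → Fin 3 → P3) (w f g : P3) :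
    sbr3 (fun i j => π i j * w) f g = w * sbr3 π f g := by
  simp only [sbr3, Finset.mul_sum]
  exact Finset.sum_congr rfl fun i _ => Finset.sum_congr rfl fun j _ => by ring

theorem sbr3_pi30 (f g : P3) : sbr3 pi30 f g = crossBracket X f g := by
  simp only [sbr3, pi30, crossBracket_apply, Fin.sum_univ_three, Matrix.of_apply,
    Matrix.cons_val', Matrix.cons_val_fin_one, Matrix.cons_val]
  ring

theorem combo3_eq_crossBracket (α β a0 a1 c : ℂ) (f g : P3) :
    combo3 α β a0 a1 c f g = crossBracket ((C α + C β * Wfac a0 a1 c) • X) f g := by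
  have cubic_eq : sbr3 (pi31 a0 a1 c) f g = Wfac a0 a1 c * sbr3 pi30 f g :=
    sbr3_mul_right pi30 _ f g
  rw [combo3, cubic_eq, sbr3_pi30, crossBracket_smul]
  ring

theorem statement3 (a0 a1 c : ℂ) (α β : ℂ) (f g h : P3) :
    combo3 α β a0 a1 c f (combo3 α β a0 a1 c g h)
      + combo3 α β a0 a1 c g (combo3 α β a0 a1 c h f)
      + combo3 α β a0 a1 c h (combo3 α β a0 a1 c f g) = 0 := by
  simpa only [combo3_eq_crossBracket] using statement3_general _ f g h

end
end

section
/- The Kowalevski integrals on so*(4) are in involution with respect to the Lie–Poisson bracket: {H_1, H_2}_0 = 0, where H_1 = J_1² + J_2² + 2J_3² − 2b x_1 and H_2 = (J_+² + 2b x_+ − 𝒫b²)(J_−² + 2b x_− − 𝒫b²). -/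
/-!
STATEMENT 9: The Kowalevski integrals on so*(4) are in involution with respect to the
Lie–Poisson bracket: {H_1, H_2}_0 = 0, where H_1 = J_1² + J_2² + 2J_3² − 2b x_1 and
H_2 = (J_+² + 2b x_+ − 𝒫b²)(J_−² + 2b x_− − 𝒫b²).
Coordinates: index 0,1,2 ↔ x_1,x_2,x_3 and index 3,4,5 ↔ J_1,J_2,J_3.
-/

noncomputable section
open MvPolynomial

/-- Polynomials in the six coordinates x_1,x_2,x_3,J_1,J_2,J_3 over ℂ. -/
abbrev P6 := MvPolynomial (Fin 6) ℂ

/-- The bracket on polynomials associated with a Poisson structure matrix `π`: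
`{f,g} = Σ_{i,j} π i j ∂_i f ∂_j g`. -/
noncomputable def sbr6 (π : Fin 6 → Fin 6 → P6) (f g : P6) : P6 :=
  ∑ i : Fin 6, ∑ j : Fin 6, π i j * pderiv i f * pderiv j g

/-- The so*(4) Lie–Poisson structure matrix: {J_i,J_j} = ε_{ijk}J_k,
{J_i,x_j} = ε_{ijk}x_k, {x_i,x_j} = −𝒫 ε_{ijk}J_k. -/
noncomputable def piSO4 (P : ℂ) : Fin 6 → Fin 6 → P6 := fun i j =>
  !![0, -(C P * X 5), C P * X 4, 0, X 2, -(X 1);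
     C P * X 5, 0, -(C P * X 3), -(X 2), 0, X 0;
     -(C P * X 4), C P * X 3, 0, X 1, -(X 0), 0;
     0, X 2, -(X 1), 0, X 5, -(X 4);
     -(X 2), 0, X 0, -(X 5), 0, X 3;
     X 1, -(X 0), 0, X 4, -(X 3), 0] i j

/-- The Hamiltonian H_1 = J_1² + J_2² + 2J_3² − 2b x_1. -/
noncomputable def H1p (b : ℂ) : P6 :=
  X 3 ^ 2 + X 4 ^ 2 + 2 * X 5 ^ 2 - C (2 * b) * X 0

/-- The second integral H_2 = (J_+² + 2b x_+ − 𝒫b²)(J_−² + 2b x_− − 𝒫b²),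
with J_± = J_1 ± iJ_2 and x_± = x_1 ± ix_2. -/
noncomputable def H2p (b P : ℂ) : P6 :=
  ((X 3 + C Complex.I * X 4) ^ 2 + C (2 * b) * (X 0 + C Complex.I * X 1) - C (P * b ^ 2)) *
    ((X 3 - C Complex.I * X 4) ^ 2 + C (2 * b) * (X 0 - C Complex.I * X 1) - C (P * b ^ 2))

/-!
The factors of `H₂` are Darboux polynomials of the Kowalevski field `{H₁, ·}₀`: the field multiplies
them by `-4i J₃` and `4i J₃` respectively. Since the cofactors are opposite, the product `H₂` is
conserved. Both eigenvalue equations are instances of one identity, valid for any `s` with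
`s² = -1` in place of `i`.
-/

section Derivation

variable {R A : Type*} [CommSemiring R]

theorem derivation_sum_apply {M ι : Type*} [CommSemiring A] [AddCommMonoid M] [Algebra R A]
    [Module A M] [Module R M] (t : Finset ι) (D : ι → Derivation R A M) (a : A) :
    (∑ i ∈ t, D i) a = ∑ i ∈ t, D i a := by
  rw [← Derivation.coeFnAddMonoidHom_apply, map_sum, Finset.sum_apply]
  rfl

theorem derivation_mul_eq_zero_of_opposite_cofactors [CommRing A] [Algebra R A]
    (D : Derivation R A A) {a u v : A} (hu : D u = a * u) (hv : D v = -a * v) :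
    D (u * v) = 0 := by
  rw [D.leibniz, hu, hv, smul_eq_mul, smul_eq_mul]
  ring

end Derivation

section HamiltonianDerivation

variable {σ R : Type*} [Fintype σ] [CommSemiring R]

/-- The Hamiltonian vector field `{f, ·}` of `f` for the bracket with structure matrix `π`,
encoded as the derivation sending the coordinate `X j` to `{f, X j}`. -/
def hamiltonianDerivation (π : σ → σ → MvPolynomial σ R) (f : MvPolynomial σ R) :
    Derivation R (MvPolynomial σ R) (MvPolynomial σ R) :=
  mkDerivation R fun j => ∑ i, π i j * pderiv i f

theorem hamiltonianDerivation_X (π : σ → σ → MvPolynomial σ R) (f : MvPolynomial σ R) (j : σ) :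
    hamiltonianDerivation π f (X j) = ∑ i, π i j * pderiv i f :=
  mkDerivation_X ..

theorem hamiltonianDerivation_eq_sum_smul_pderiv (π : σ → σ → MvPolynomial σ R)
    (f : MvPolynomial σ R) :
    hamiltonianDerivation π f = ∑ j, (∑ i, π i j * pderiv i f) • pderiv j := by
  classical
  refine derivation_ext fun k => ?_
  simp [hamiltonianDerivation_X, derivation_sum_apply, pderiv_X, Pi.single_apply]

theorem hamiltonianDerivation_apply (π : σ → σ → MvPolynomial σ R) (f g : MvPolynomial σ R) :
    hamiltonianDerivation π f g = ∑ i, ∑ j, π i j * pderiv i f * pderiv j g := by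
  rw [hamiltonianDerivation_eq_sum_smul_pderiv, Finset.sum_comm]
  simp [derivation_sum_apply, Finset.sum_mul]

end HamiltonianDerivation

theorem sbr6_eq_hamiltonianDerivation (π : Fin 6 → Fin 6 → P6) (f g : P6) :
    sbr6 π f g = hamiltonianDerivation π f g :=
  (hamiltonianDerivation_apply π f g).symm

/-- The Kowalevski vector field `{H₁, ·}₀` on so*(4). -/
def kowalevskiField (b P : ℂ) : Derivation ℂ P6 P6 :=
  hamiltonianDerivation (piSO4 P) (H1p b)

theorem pderiv_H1p (b : ℂ) (i : Fin 6) :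
    pderiv i (H1p b) = ![-(2 * C b), 0, 0, 2 * X 3, 2 * X 4, 4 * X 5] i := by
  have chain_rule : pderiv i (H1p b) = 2 * X 3 * pderiv i (X 3) + 2 * X 4 * pderiv i (X 4)
      + 4 * X 5 * pderiv i (X 5) - 2 * C b * pderiv i (X 0) := by
    have pderiv_two : pderiv i (2 : P6) = 0 := (pderiv i).map_natCast 2
    simp only [H1p, map_sub, map_add, pderiv_mul, pderiv_pow, pderiv_C, pderiv_two, C_mul,
      map_ofNat]
    ring
  rw [chain_rule]
  fin_cases i <;> simp [pderiv_X]

theorem kowalevskiField_X (b P : ℂ) (j : Fin 6) :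
    kowalevskiField b P (X j) =
      2 * X 3 * piSO4 P 3 j + 2 * X 4 * piSO4 P 4 j + 4 * X 5 * piSO4 P 5 j
        - 2 * C b * piSO4 P 0 j := by
  simp only [kowalevskiField, hamiltonianDerivation_X, pderiv_H1p, Fin.sum_univ_six,
    Matrix.cons_val]
  ring

/-- The combination `J₁ + s J₂`, which is `J_±` for `s = ±i`. -/
def complexJ (s : ℂ) : P6 := X 3 + C s * X 4

/-- The combination `x₁ + s x₂`, which is `x_±` for `s = ±i`. -/
def complexX (s : ℂ) : P6 := X 0 + C s * X 1

/-- The polynomial `(J₁ + s J₂)² + 2b (x₁ + s x₂) - 𝒫b²`, whose cases `s = ±i` are the two factors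
of `H₂`. -/
def kowalevskiFactor (b P s : ℂ) : P6 :=
  complexJ s ^ 2 + C (2 * b) * complexX s - C (P * b ^ 2)

theorem H2p_eq_mul_kowalevskiFactor (b P : ℂ) :
    H2p b P = kowalevskiFactor b P Complex.I * kowalevskiFactor b P (-Complex.I) := by
  simp only [H2p, kowalevskiFactor, complexJ, complexX, C_neg, neg_mul, ← sub_eq_add_neg]

theorem C_sq_eq_neg_one {σ R : Type*} [CommRing R] {s : R} (hs : s ^ 2 = -1) :
    (C s : MvPolynomial σ R) ^ 2 = -1 := by
  rw [← C_pow, hs, C_neg, C_1]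

theorem kowalevskiField_complexJ (b P : ℂ) {s : ℂ} (hs : s ^ 2 = -1) :
    kowalevskiField b P (complexJ s) = -2 * C s * (X 5 * complexJ s + C b * X 2) := by
  simp only [complexJ, map_add, Derivation.leibniz, derivation_C, smul_eq_mul, mul_zero,
    add_zero, kowalevskiField_X, piSO4, Matrix.of_apply, Matrix.cons_val]
  linear_combination 2 * X 4 * X 5 * C_sq_eq_neg_one hs

theorem kowalevskiField_complexX (b P : ℂ) {s : ℂ} (hs : s ^ 2 = -1) :
    kowalevskiField b P (complexX s) =
      2 * C s * (X 2 * complexJ s - 2 * X 5 * complexX s + C b * C P * X 5) := by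
  simp only [complexJ, complexX, map_add, Derivation.leibniz, derivation_C, smul_eq_mul, mul_zero,
    add_zero, kowalevskiField_X, piSO4, Matrix.of_apply, Matrix.cons_val]
  linear_combination (4 * X 1 * X 5 - 2 * X 2 * X 4) * C_sq_eq_neg_one hs

theorem kowalevskiField_kowalevskiFactor (b P : ℂ) {s : ℂ} (hs : s ^ 2 = -1) :
    kowalevskiField b P (kowalevskiFactor b P s) = -4 * C s * X 5 * kowalevskiFactor b P s := by
  have chain_rule : kowalevskiField b P (kowalevskiFactor b P s) =
      2 * complexJ s * kowalevskiField b P (complexJ s)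
        + C (2 * b) * kowalevskiField b P (complexX s) := by
    simp [kowalevskiFactor, Derivation.leibniz_pow, mul_assoc, -C_mul, -map_mul]
  rw [chain_rule, kowalevskiField_complexJ b P hs, kowalevskiField_complexX b P hs,
    kowalevskiFactor]
  simp only [C_mul, C_pow, map_ofNat]
  ring

theorem statement9 (b P : ℂ) : sbr6 (piSO4 P) (H1p b) (H2p b P) = 0 := by
  have h_plus := kowalevskiField_kowalevskiFactor b P Complex.I_sq
  have h_minus := kowalevskiField_kowalevskiFactor b P (s := -Complex.I) (by simp)
  rw [sbr6_eq_hamiltonianDerivation, H2p_eq_mul_kowalevskiFactor]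
  refine derivation_mul_eq_zero_of_opposite_cofactors _ h_plus (h_minus.trans ?_)
  rw [C_neg]
  ring

end
end

section
/- For the Kowalevski top on so*(4), the entry B(λ) = λ⁵ + B_3λ³ + B_1λ of the Lax matrix coincides with the characteristic polynomial of the control matrix F in the variable λ²: as rational functions of (x_1,x_2,x_3,J_1,J_2,J_3), tr F = −B_3 and det F = B_1, so that λ⁴ + B_3λ² + B_1 = det(λ²·Id − F). -/
/-!
STATEMENT 15: For the Kowalevski top on so*(4), the entry B(λ) = λ⁵ + B_3λ³ + B_1λ of the
Lax matrix coincides with the characteristic polynomial of the control matrix F in the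
variable λ²: tr F = −B_3 and det F = B_1, so that λ⁴ + B_3λ² + B_1 = det(λ²·Id − F).
-/

set_option maxHeartbeats 1000000

noncomputable section

/-- The field ℂ(x_1,x_2,x_3,J_1,J_2,J_3) of rational functions in six variables. -/
abbrev Kw := FractionRing (MvPolynomial (Fin 6) ℂ)

/-- The coordinates: `zz 0, zz 1, zz 2` are x_1, x_2, x_3 and `zz 3, zz 4, zz 5`
are J_1, J_2, J_3. -/
noncomputable def zz (i : Fin 6) : Kw :=
  algebraMap (MvPolynomial (Fin 6) ℂ) Kw (MvPolynomial.X i)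

/-- The constants ℂ ⊆ ℂ(x_1,…,J_3). -/
noncomputable def cc (w : ℂ) : Kw := algebraMap ℂ Kw w

/-- X = (J_1J_3 + b x_3)/J_2. -/
noncomputable def KX (b : ℂ) : Kw := (zz 3 * zz 5 + cc b * zz 2) / zz 4

/-- H_1 = J_1² + J_2² + 2J_3² − 2b x_1. -/
noncomputable def KH1 (b : ℂ) : Kw := zz 3 ^ 2 + zz 4 ^ 2 + 2 * zz 5 ^ 2 - cc (2 * b) * zz 0

/-- H_2 = (J_+² + 2b x_+ − 𝒫b²)(J_−² + 2b x_− − 𝒫b²). -/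
noncomputable def KH2 (b P : ℂ) : Kw :=
  ((zz 3 + cc Complex.I * zz 4) ^ 2 + cc (2 * b) * (zz 0 + cc Complex.I * zz 1)
      - cc (P * b ^ 2)) *
    ((zz 3 - cc Complex.I * zz 4) ^ 2 + cc (2 * b) * (zz 0 - cc Complex.I * zz 1)
      - cc (P * b ^ 2))

/-- Q_1 = x_2J_3 − x_3J_2. -/
noncomputable def KQ1 : Kw := zz 1 * zz 5 - zz 2 * zz 4
/-- Q_2 = x_3J_1 − x_1J_3. -/
noncomputable def KQ2 : Kw := zz 2 * zz 3 - zz 0 * zz 5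
/-- Q_3 = x_1J_2 − x_2J_1. -/
noncomputable def KQ3 : Kw := zz 0 * zz 4 - zz 1 * zz 3

/-- Z_1 = x_3J_3 − x_2J_2 − 2x_1J_1 + x_2(J_1²−2J_3²)/J_2 + (J_3(b𝒫−2x_1)+x_3J_1)X/J_2. -/
noncomputable def KZ1 (b P : ℂ) : Kw :=
  zz 2 * zz 5 - zz 1 * zz 4 - 2 * zz 0 * zz 3 + zz 1 * (zz 3 ^ 2 - 2 * zz 5 ^ 2) / zz 4
    + (zz 5 * (cc (b * P) - 2 * zz 0) + zz 2 * zz 3) * KX b / zz 4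

/-- Z_2 = b²𝒫² + (H_1 − J_3²)𝒫. -/
noncomputable def KZ2 (b P : ℂ) : Kw := cc (b ^ 2 * P ^ 2) + (KH1 b - zz 5 ^ 2) * cc P

/-- 𝒞_1 = x_1J_1 + x_2J_2 + x_3J_3. -/
noncomputable def KC1 : Kw := zz 0 * zz 3 + zz 1 * zz 4 + zz 2 * zz 5

/-- 𝒞_2 = x_1² + x_2² + x_3² − 𝒫(J_1² + J_2² + J_3²). -/
noncomputable def KC2 (P : ℂ) : Kw :=
  zz 0 ^ 2 + zz 1 ^ 2 + zz 2 ^ 2 - cc P * (zz 3 ^ 2 + zz 4 ^ 2 + zz 5 ^ 2)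

/-- `D` is the Lie–Poisson bracket of so*(4): an antisymmetric biderivation of the field
ℂ(x_1,…,J_3) with {J_i,J_j}_0 = ε_{ijk}J_k, {J_i,x_j}_0 = ε_{ijk}x_k,
{x_i,x_j}_0 = −𝒫 ε_{ijk}J_k. -/
def IsKowBr0 (P : ℂ) (D : Kw → Derivation ℂ Kw Kw) : Prop :=
  (∀ f g : Kw, D f g = -(D g f)) ∧
  D (zz 3) (zz 4) = zz 5 ∧ D (zz 4) (zz 5) = zz 3 ∧ D (zz 5) (zz 3) = zz 4 ∧
  D (zz 3) (zz 0) = 0 ∧ D (zz 3) (zz 1) = zz 2 ∧ D (zz 3) (zz 2) = -(zz 1) ∧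
  D (zz 4) (zz 0) = -(zz 2) ∧ D (zz 4) (zz 1) = 0 ∧ D (zz 4) (zz 2) = zz 0 ∧
  D (zz 5) (zz 0) = zz 1 ∧ D (zz 5) (zz 1) = -(zz 0) ∧ D (zz 5) (zz 2) = 0 ∧
  D (zz 0) (zz 1) = -(cc P * zz 5) ∧ D (zz 1) (zz 2) = -(cc P * zz 3) ∧
  D (zz 2) (zz 0) = -(cc P * zz 4)

/-- `D` is the second Kowalevski bracket {·,·}_1: an antisymmetric biderivation of the
field ℂ(x_1,…,J_3) with the indicated values on the coordinates. -/
def IsKowBr1 (b P : ℂ) (D : Kw → Derivation ℂ Kw Kw) : Prop :=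
  (∀ f g : Kw, D f g = -(D g f)) ∧
  D (zz 3) (zz 4) = -(zz 5) * KX b ^ 2 - cc b * (zz 2 * zz 3 + zz 1 * KX b) ∧
  D (zz 3) (zz 5) = zz 4 * KX b ^ 2 - cc b * (zz 2 * zz 4 - zz 1 * zz 5) * KX b / zz 4
      + cc b * zz 1 * (2 * zz 3 * zz 4 + cc b * zz 1) / zz 4 ∧
  D (zz 4) (zz 5) = -(zz 3) * KX b ^ 2 - cc b * (zz 0 * zz 3 + zz 2 * zz 5)
      - cc b * zz 1 * (zz 3 ^ 2 - zz 5 ^ 2 + cc b * zz 0) / zz 4 ∧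
  D (zz 0) (zz 3) = -(2 * KQ1 * (cc b * (zz 1 * zz 4 + zz 2 * zz 5)
      + (zz 4 ^ 2 + zz 5 ^ 2) * zz 3)) / zz 4 ^ 2 ∧
  D (zz 0) (zz 4) = -(zz 2) * KX b ^ 2 + cc (b * P) * zz 4 * KX b
      + (KQ1 * (2 * zz 3 ^ 2 - KH1 b) - cc b * zz 1 * zz 2 * zz 3) / zz 4 ∧
  D (zz 0) (zz 5) = zz 1 * KX b ^ 2 - cc (b * P) * (zz 3 * zz 4 + cc b * zz 1)
      + (KQ1 * (zz 3 * KX b + zz 4 * zz 5) + cc b * zz 1 ^ 2 * zz 3) / zz 4 ∧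
  D (zz 1) (zz 3) = -(zz 2) * zz 3 ^ 2 - (cc b * zz 1 + zz 5 * KX b + zz 3 * zz 4)
      * ((cc (b * P) - 2 * zz 0) * zz 5 + zz 2 * zz 3) / zz 4 ∧
  D (zz 1) (zz 4) = -(KQ2 * (KH1 b - zz 3 ^ 2 + cc (b ^ 2 * P))
      + cc b * zz 5 * (cc P * zz 5 ^ 2 + zz 2 ^ 2)) / zz 4 ∧
  D (zz 1) (zz 5) = cc (b * P) * (zz 3 ^ 2 + zz 5 ^ 2)
      + (KQ2 * (zz 4 * zz 5 + zz 3 * KX b)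
        + (cc (b * P) - zz 0) * (cc b * zz 1 + zz 5 * KX b) * zz 3
        + cc b * zz 1 * zz 2 * zz 5) / zz 4 ∧
  D (zz 2) (zz 3) = zz 1 * zz 3 ^ 2
      + (cc b * (zz 1 * zz 4 + zz 2 * zz 5) + (zz 4 ^ 2 + zz 5 ^ 2) * zz 3)
        * (cc (b * P) - 2 * zz 0 + zz 1 * zz 3 / zz 4) / zz 4 ∧
  D (zz 2) (zz 4) = zz 0 * KX b ^ 2 - cc (b * P) * (cc b * zz 0 + zz 3 ^ 2 - zz 5 ^ 2)
      + (KQ3 * (2 * zz 3 ^ 2 - KH1 b) + cc b * zz 1 * (zz 0 * zz 3 + zz 2 * zz 5)) / zz 4 ∧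
  D (zz 2) (zz 5) = (KQ3 - cc (b * P) * zz 4) * (zz 4 * zz 5 + zz 3 * KX b) / zz 4
      - cc b * zz 1 * (zz 0 * KX b + zz 1 * zz 5) / zz 4 ∧
  D (zz 0) (zz 1) = KZ1 b P * zz 2 - KZ2 b P * zz 5 - cc (b * P) * zz 3 * KQ1 / zz 4 ∧
  D (zz 0) (zz 2) = -(KZ1 b P * zz 1 - KZ2 b P * zz 4) + cc (b * P) * KX b * KQ1 / zz 4 ∧
  D (zz 1) (zz 2) = KZ1 b P * zz 0 - KZ2 b P * zz 3 + cc (b * P) * (zz 0 * zz 3 - zz 2 * zz 5)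
      - cc (b * P) * zz 1 * (zz 3 ^ 2 - zz 5 ^ 2) / zz 4


/-- B_3 = X² − J² + 2bx_1 − 𝒫b². -/
noncomputable def KB3 (b P : ℂ) : Kw :=
  KX b ^ 2 - (zz 3 ^ 2 + zz 4 ^ 2 + zz 5 ^ 2) + cc (2 * b) * zz 0 - cc (P * b ^ 2)

/-- B_1 = −J²X² − 2b(x_2J_3−x_3J_2)X − 2b𝒞_1J_1 − b²(x_2²+x_3²−𝒫J_1²). -/
noncomputable def KB1 (b P : ℂ) : Kw :=
  -((zz 3 ^ 2 + zz 4 ^ 2 + zz 5 ^ 2) * KX b ^ 2)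
    - cc (2 * b) * (zz 1 * zz 5 - zz 2 * zz 4) * KX b - cc (2 * b) * KC1 * zz 3
    - cc (b ^ 2) * (zz 1 ^ 2 + zz 2 ^ 2 - cc P * zz 3 ^ 2)

/-- Z_3 = H_2 − 2(b(b𝒫−2x_1)−J_1²)X² + 8bx_2J_3X + (2𝒫J_3²−2x_3²)b² + 4bQ_2J_3
+ 2(J_2²+2J_1²)J_3². -/
noncomputable def KZ3 (b P : ℂ) : Kw :=
  KH2 b P - 2 * (cc b * (cc (b * P) - 2 * zz 0) - zz 3 ^ 2) * KX b ^ 2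
    + 8 * cc b * zz 1 * zz 5 * KX b + (2 * cc P * zz 5 ^ 2 - 2 * zz 2 ^ 2) * cc (b ^ 2)
    + 4 * cc b * KQ2 * zz 5 + 2 * (zz 4 ^ 2 + 2 * zz 3 ^ 2) * zz 5 ^ 2

/-- The control matrix F = [[ (H_1+b²𝒫)/2 − X² − J_3², 1/4 ], [ Z_3, (H_1+b²𝒫)/2 ]]. -/
noncomputable def KF (b P : ℂ) : Matrix (Fin 2) (Fin 2) Kw :=
  !![(KH1 b + cc (b ^ 2 * P)) / 2 - KX b ^ 2 - zz 5 ^ 2, 1 / 4;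
     KZ3 b P, (KH1 b + cc (b ^ 2 * P)) / 2]

/-!
Put `c = 2bx₁ − 𝒫b²`. The factors of `H₂` are `(J₁² − J₂² + c) ± 2i(J₁J₂ + bx₂)`, so `H₂` is a sum
of two squares, and `H₁ + b²𝒫 = J₁² + J₂² + 2J₃² − c`. Their difference of squares factors:
`(H₁ + b²𝒫)² − (J₁² − J₂² + c)² = 4(J₁² + J₃²)(J₂² + J₃² − c)`. The only other input is the relation
`XJ₂ = J₁J₃ + bx₃`, with which both `Z₃` and `B₁` can be rewritten so that `x₃` appears outside `X`
only as `b²x₃²`; the identity `det F = B₁` is then one of polynomials in independent variables.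
-/

section General

variable {R : Type*} [CommRing R]

lemma det_smul_one_sub_fin_two (t : R) (M : Matrix (Fin 2) (Fin 2) R) :
    (t • (1 : Matrix (Fin 2) (Fin 2) R) - M).det = t ^ 2 - M.trace * t + M.det := by
  simp only [Matrix.det_fin_two, Matrix.trace_fin_two, Matrix.sub_apply, Matrix.smul_apply,
    Matrix.one_fin_two, Matrix.of_apply, Matrix.cons_val', Matrix.cons_val_zero,
    Matrix.cons_val_one, Matrix.cons_val_fin_one, smul_eq_mul]
  ring

lemma add_mul_sub_eq_sq_add_sq {i : R} (hi : i ^ 2 = -1) (p q : R) :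
    (p + i * q) * (p - i * q) = p ^ 2 + q ^ 2 := by
  linear_combination -q ^ 2 * hi

lemma add_mul_sq_of_sq_eq_neg_one {i : R} (hi : i ^ 2 = -1) (p q : R) :
    (p + i * q) ^ 2 = p ^ 2 - q ^ 2 + i * (2 * p * q) := by
  linear_combination q ^ 2 * hi

end General

local notation "x₁" => zz 0
local notation "x₂" => zz 1
local notation "x₃" => zz 2
local notation "J₁" => zz 3
local notation "J₂" => zz 4
local notation "J₃" => zz 5

lemma cc_mul (u v : ℂ) : cc (u * v) = cc u * cc v := map_mul _ u v

lemma cc_pow (u : ℂ) (n : ℕ) : cc (u ^ n) = cc u ^ n := map_pow _ u n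

lemma cc_ofNat (n : ℕ) [n.AtLeastTwo] : cc ofNat(n) = ofNat(n) := map_ofNat _ n

lemma cc_I_sq : cc Complex.I ^ 2 = -1 := by
  rw [← cc_pow, Complex.I_sq, cc, map_neg, map_one]

lemma zz_ne_zero (i : Fin 6) : zz i ≠ 0 :=
  (FaithfulSMul.algebraMap_eq_zero_iff _ _).not.mpr (MvPolynomial.X_ne_zero i)

lemma KX_mul_J₂ (b : ℂ) : KX b * J₂ = J₁ * J₃ + cc b * x₃ :=
  div_mul_cancel₀ _ (zz_ne_zero 4)

/-- The combination `c = 2bx₁ − 𝒫b²` through which `x₁` and `𝒫` enter `H₁ + b²𝒫`, `H₂`, `B₃`,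
`B₁` and `Z₃`. -/
def shiftedPotential (b P : ℂ) : Kw := 2 * cc b * x₁ - cc P * cc b ^ 2

lemma KH1_add_eq (b P : ℂ) :
    KH1 b + cc (b ^ 2 * P) = J₁ ^ 2 + J₂ ^ 2 + 2 * J₃ ^ 2 - shiftedPotential b P := by
  simp only [KH1, shiftedPotential, cc_mul, cc_pow, cc_ofNat]
  ring

lemma KB3_eq (b P : ℂ) :
    KB3 b P = KX b ^ 2 - (J₁ ^ 2 + J₂ ^ 2 + J₃ ^ 2) + shiftedPotential b P := by
  simp only [KB3, shiftedPotential, cc_mul, cc_pow, cc_ofNat]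
  ring

lemma KH2_eq_sq_add_sq (b P : ℂ) :
    KH2 b P = (J₁ ^ 2 - J₂ ^ 2 + shiftedPotential b P) ^ 2
      + (2 * (J₁ * J₂ + cc b * x₂)) ^ 2 := by
  have J_plus_sq := add_mul_sq_of_sq_eq_neg_one cc_I_sq J₁ J₂
  have J_minus_sq := add_mul_sq_of_sq_eq_neg_one cc_I_sq J₁ (-J₂)
  rw [mul_neg, ← sub_eq_add_neg] at J_minus_sq
  rw [← add_mul_sub_eq_sq_add_sq cc_I_sq, KH2, J_plus_sq, J_minus_sq]
  simp only [shiftedPotential, cc_mul, cc_pow, cc_ofNat]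
  ring

lemma KH1_add_sq_sub_KH2 (b P : ℂ) :
    (KH1 b + cc (b ^ 2 * P)) ^ 2 - KH2 b P
      = 4 * (J₁ ^ 2 + J₃ ^ 2) * (J₂ ^ 2 + J₃ ^ 2 - shiftedPotential b P)
        - 4 * (J₁ * J₂ + cc b * x₂) ^ 2 := by
  rw [KH1_add_eq, KH2_eq_sq_add_sq]
  ring

-- `2(J₁J₃)² + 4bx₃J₁J₃ − 2b²x₃² = 2(XJ₂)² − 4b²x₃²`
lemma KZ3_eq (b P : ℂ) :
    KZ3 b P = KH2 b P + 2 * (J₁ ^ 2 + J₂ ^ 2 + shiftedPotential b P) * KX b ^ 2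
      + 8 * cc b * x₂ * J₃ * KX b + 2 * (J₁ ^ 2 + J₂ ^ 2 - shiftedPotential b P) * J₃ ^ 2
      - 4 * cc b ^ 2 * x₃ ^ 2 := by
  simp only [KZ3, KQ2, shiftedPotential, cc_mul, cc_pow]
  linear_combination -2 * (KX b * J₂ + (J₁ * J₃ + cc b * x₃)) * KX_mul_J₂ b

lemma KB1_eq (b P : ℂ) :
    KB1 b P = -(J₁ ^ 2 + J₂ ^ 2 + J₃ ^ 2) * KX b ^ 2 - 2 * cc b * x₂ * J₃ * KX b
      + J₁ ^ 2 * (J₂ ^ 2 - shiftedPotential b P) - (J₁ * J₂ + cc b * x₂) ^ 2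
      + cc b ^ 2 * x₃ ^ 2 := by
  simp only [KB1, KC1, shiftedPotential, cc_mul, cc_pow, cc_ofNat]
  linear_combination 2 * cc b * x₃ * KX_mul_J₂ b

lemma trace_KF (b P : ℂ) : (KF b P).trace = -KB3 b P := by
  rw [KF, Matrix.trace_fin_two_of, KH1_add_eq, KB3_eq]
  ring

lemma det_KF (b P : ℂ) : (KF b P).det = KB1 b P := by
  rw [KF, Matrix.det_fin_two_of, KZ3_eq, KB1_eq]
  linear_combination (1 / 4) * KH1_add_sq_sub_KH2 b P
    - (1 / 2) * (KX b ^ 2 + J₃ ^ 2) * KH1_add_eq b P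

theorem statement15 (b P : ℂ) :
    (KF b P).trace = -(KB3 b P) ∧
    (KF b P).det = KB1 b P ∧
    ∀ lam : Kw, lam ^ 4 + KB3 b P * lam ^ 2 + KB1 b P
      = (lam ^ 2 • (1 : Matrix (Fin 2) (Fin 2) Kw) - KF b P).det := by
  refine ⟨trace_KF b P, det_KF b P, fun lam => ?_⟩
  rw [det_smul_one_sub_fin_two, trace_KF, det_KF]
  ring

end
end
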